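/- There is no duality gap between the discrete-time primal LP on measures and the discrete-time dual LP on functions: p* = d*, i.e., sup{ μ₀(X) : (μ₀, μ, μ̂₀) feasible for the primal LP } = inf{ ∫_X w dλ : (v, w) feasible for the dual LP }. -/

import Mathlib

open MeasureTheory

/-- The (topological) support of a Borel measure. -/
def msupport {α : Type*} [TopologicalSpace α] [MeasurableSpace α] (μ : Measure α) : Set α :=
  {x | ∀ s : Set α, IsOpen s → x ∈ s → 0 < μ s}

/-- The discrete-time discounted Liouville equation for the pair `(μ₀, μ)`. -/
def LiouvilleD {n m : ℕ}
    (f : EuclideanSpace ℝ (Fin n) → EuclideanSpace ℝ (Fin m) → EuclideanSpace ℝ (Fin n))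
    (α : ℝ) (μ₀ : Measure (EuclideanSpace ℝ (Fin n)))
    (μ : Measure (EuclideanSpace ℝ (Fin n) × EuclideanSpace ℝ (Fin m))) : Prop :=
  ∀ v : EuclideanSpace ℝ (Fin n) → ℝ, Continuous v →
    ∫ p, v p.1 ∂μ = ∫ x, v x ∂μ₀ + α * ∫ p, v (f p.1 p.2) ∂μ

/-- Feasibility of a triple `(μ₀, μ, μ̂₀)` for the discrete-time primal LP. -/
def FeasibleD {n m : ℕ} (X : Set (EuclideanSpace ℝ (Fin n)))
    (U : Set (EuclideanSpace ℝ (Fin m)))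
    (f : EuclideanSpace ℝ (Fin n) → EuclideanSpace ℝ (Fin m) → EuclideanSpace ℝ (Fin n))
    (α : ℝ) (μ₀ : Measure (EuclideanSpace ℝ (Fin n)))
    (μ : Measure (EuclideanSpace ℝ (Fin n) × EuclideanSpace ℝ (Fin m)))
    (μh : Measure (EuclideanSpace ℝ (Fin n))) : Prop :=
  IsFiniteMeasure μ₀ ∧ IsFiniteMeasure μ ∧ IsFiniteMeasure μh ∧
  msupport μ₀ ⊆ X ∧ msupport μh ⊆ X ∧ msupport μ ⊆ X ×ˢ U ∧
  LiouvilleD f α μ₀ μ ∧ μ₀ + μh = volume.restrict X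

/-- Feasibility of a pair of continuous functions `(v, w)` for the discrete-time dual LP. -/
def DualFeasD {n m : ℕ} (X : Set (EuclideanSpace ℝ (Fin n)))
    (U : Set (EuclideanSpace ℝ (Fin m)))
    (f : EuclideanSpace ℝ (Fin n) → EuclideanSpace ℝ (Fin m) → EuclideanSpace ℝ (Fin n))
    (α : ℝ) (v w : EuclideanSpace ℝ (Fin n) → ℝ) : Prop :=
  Continuous v ∧ Continuous w ∧
  (∀ x ∈ X, ∀ u ∈ U, α * v (f x u) ≤ v x) ∧
  (∀ x ∈ X, v x + 1 ≤ w x) ∧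
  (∀ x ∈ X, 0 ≤ w x)

open Set Filter Topology TopologicalSpace Function
open scoped BoundedContinuousFunction ENNReal

/-!
Weak duality: integrating the Liouville equation against a dual potential `v` gives `0 ≤ ∫ v dμ₀`,
so `μ₀(X) ≤ ∫ (v + 1) dμ₀ ≤ ∫_X w dλ`.

For equality, let `W ≥ 0` be the value function of the discounted problem whose running cost
vanishes exactly on `X`, that is, the fixed point of the Bellman operator. Its zero set `S` is
a controlled invariant subset of `X`. The pairs `(-kW, max (1 - kW) 0)` are dual feasible and their
values decrease to `λ(S)`. Conversely, a measurable feedback that keeps `S` invariant generates from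
`μ₀ = λ|_S` a discounted occupation measure, which is primal feasible with value `λ(S)`.
-/

section MeasurableSelection

theorem exists_measurable_rightInverse_of_isCompact_real {E : Type*} [TopologicalSpace E]
    [T2Space E] [MeasurableSpace E] [OpensMeasurableSpace E] {C : Set ℝ} (hC : IsCompact C)
    {q : C → E} (hq : Continuous q) (hsurj : Surjective q) :
    ∃ g : E → C, Measurable g ∧ RightInverse g q := by
  have : CompactSpace C := isCompact_iff_compactSpace.1 hC
  have exists_least : ∀ y, ∃ t, IsLeast (q ⁻¹' {y}) t := fun y =>
    (isClosed_singleton.preimage hq).isCompact.exists_isLeast (hsurj y)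
  choose g hg using exists_least
  have preimage_Iic : ∀ c, (fun y => (g y : ℝ)) ⁻¹' Iic c = q '' {t | (t : ℝ) ≤ c} := by
    intro c
    ext y
    refine ⟨fun hy => ⟨g y, hy, (hg y).1⟩, ?_⟩
    rintro ⟨t, ht, hty⟩
    exact (Subtype.coe_le_coe.2 ((hg y).2 hty)).trans ht
  have hmeas : Measurable fun y => (g y : ℝ) := measurable_of_Iic fun c => by
    rw [preimage_Iic]
    exact ((isClosed_le continuous_subtype_val continuous_const).isCompact.image hq).measurableSet
  exact ⟨g, hmeas.subtype_mk, fun y => (hg y).1⟩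

theorem exists_measurable_rightInverse_of_compactSpace {Z E : Type*} [TopologicalSpace Z]
    [MetrizableSpace Z] [CompactSpace Z] [Nonempty Z] [MeasurableSpace Z] [BorelSpace Z]
    [TopologicalSpace E] [T2Space E] [MeasurableSpace E] [OpensMeasurableSpace E]
    {q : Z → E} (hq : Continuous q) (hsurj : Surjective q) :
    ∃ g : E → Z, Measurable g ∧ RightInverse g q := by
  let := metrizableSpaceMetric Z
  obtain ⟨φ, hφ, hφsurj⟩ := exists_nat_bool_continuous_surjective_of_compact Z
  let ψ : cantorSet → Z := φ ∘ cantorSetHomeomorphNatToBool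
  have hψ : Continuous ψ := hφ.comp cantorSetHomeomorphNatToBool.continuous
  have hψsurj : Surjective ψ := hφsurj.comp cantorSetHomeomorphNatToBool.surjective
  obtain ⟨g, hg, hgq⟩ := exists_measurable_rightInverse_of_isCompact_real isCompact_cantorSet
    (hq.comp hψ) (hsurj.comp hψsurj)
  exact ⟨ψ ∘ g, hψ.measurable.comp hg, hgq⟩

theorem exists_measurable_section_of_isCompact {E F : Type*} [TopologicalSpace E]
    [MetrizableSpace E] [MeasurableSpace E] [BorelSpace E] [TopologicalSpace F]
    [MetrizableSpace F] [MeasurableSpace F] [BorelSpace F] [SecondCountableTopologyEither E F]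
    [Nonempty F] {K : Set (E × F)} (hK : IsCompact K) :
    ∃ g : E → F, Measurable g ∧ ∀ p ∈ K, (p.1, g p.1) ∈ K := by
  rcases K.eq_empty_or_nonempty with rfl | hne
  · exact ⟨fun _ => Classical.arbitrary F, measurable_const, by simp⟩
  have : Nonempty K := hne.to_subtype
  have : CompactSpace K := isCompact_iff_compactSpace.1 hK
  let q : K → Prod.fst '' K := (mapsTo_image Prod.fst K).restrict
  have hq : Continuous q := continuous_fst.restrict (mapsTo_image Prod.fst K)
  obtain ⟨s, hs, hsq⟩ := exists_measurable_rightInverse_of_compactSpace hq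
    (surjective_mapsTo_image_restrict Prod.fst K)
  obtain ⟨g, hg, hgs⟩ :=
    (MeasurableEmbedding.subtype_coe
      (hK.image continuous_fst).measurableSet).exists_measurable_extend
      (measurable_snd.comp (measurable_subtype_coe.comp hs)) fun _ => ‹Nonempty F›
  refine ⟨g, hg, fun p hp => ?_⟩
  let x : Prod.fst '' K := ⟨p.1, p, hp, rfl⟩
  have hfst : (s x : E × F).1 = p.1 := congrArg Subtype.val (hsq x)
  have hsnd : g p.1 = (s x : E × F).2 := congrFun hgs x
  rw [hsnd, ← hfst]
  exact (s x).2

end MeasurableSelection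

section OccupationMeasure

variable {E : Type*} [MeasurableSpace E]

/-- The discounted occupation measure `∑ₖ aᵏ (Tᵏ)₊ μ₀` of the dynamical system `T` with initial
distribution `μ₀`. It is the state marginal of the measures produced for the primal problem. -/
noncomputable def discountedOccupation (T : E → E) (a : ℝ≥0∞) (μ₀ : Measure E) : Measure E :=
  Measure.sum fun k => a ^ k • μ₀.map T^[k]

variable {T : E → E} {a : ℝ≥0∞} {μ₀ : Measure E}

theorem discountedOccupation_eq_add_smul_map (hT : Measurable T) :
    discountedOccupation T a μ₀ = μ₀ + a • (discountedOccupation T a μ₀).map T := by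
  ext s hs
  rw [discountedOccupation, Measure.map_sum hT.aemeasurable]
  simp only [Measure.add_apply, Measure.smul_apply, Measure.sum_apply _ hs, Measure.map_smul,
    Measure.map_map hT (hT.iterate _), smul_eq_mul, ← ENNReal.tsum_mul_left]
  rw [tsum_eq_zero_add' ENNReal.summable]
  simp only [pow_zero, iterate_zero, Measure.map_id, one_mul, ← mul_assoc, ← pow_succ',
    ← iterate_succ']

theorem isFiniteMeasure_discountedOccupation [IsFiniteMeasure μ₀] (hT : Measurable T)
    (ha : a < 1) : IsFiniteMeasure (discountedOccupation T a μ₀) := by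
  have mass : discountedOccupation T a μ₀ univ = (1 - a)⁻¹ * μ₀ univ := by
    simp only [discountedOccupation, Measure.sum_apply _ MeasurableSet.univ, Measure.smul_apply,
      smul_eq_mul, Measure.map_apply (hT.iterate _) MeasurableSet.univ, preimage_univ,
      ENNReal.tsum_mul_right, ENNReal.tsum_geometric]
  refine ⟨mass ▸ ENNReal.mul_lt_top ?_ (measure_lt_top _ _)⟩
  simpa using ha

theorem ae_mem_discountedOccupation (hT : Measurable T) {S : Set E} (hS : MeasurableSet S)
    (hTS : MapsTo T S S) (h₀ : ∀ᵐ x ∂μ₀, x ∈ S) : ∀ᵐ x ∂discountedOccupation T a μ₀, x ∈ S := by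
  refine Measure.ae_sum_iff.2 fun k => Measure.ae_smul_measure ?_ _
  refine (ae_map_iff (hT.iterate k).aemeasurable hS).2 ?_
  filter_upwards [h₀] with x hx using hTS.iterate k hx

end OccupationMeasure

theorem integrable_of_ae_mem_isCompact {E : Type*} [TopologicalSpace E] [MeasurableSpace E]
    [OpensMeasurableSpace E] [T2Space E] {μ : Measure E} [IsFiniteMeasure μ] {K : Set E}
    (hK : IsCompact K) (hμ : ∀ᵐ x ∂μ, x ∈ K) {v : E → ℝ} (hv : Continuous v) :
    Integrable v μ := by
  have := hv.continuousOn.integrableOn_compact (μ := μ) hK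
  rwa [IntegrableOn, Measure.restrict_eq_self_of_ae_mem hμ] at this

theorem tendsto_integral_max_one_sub_mul {Ω : Type*} [MeasurableSpace Ω] {μ : Measure Ω}
    [IsFiniteMeasure μ] {W : Ω → ℝ} (hW : Measurable W) (hW0 : ∀ x, 0 ≤ W x) :
    Tendsto (fun k : ℕ => ∫ x, max (1 - k * W x) 0 ∂μ) atTop (𝓝 (μ.real (W ⁻¹' {0}))) := by
  rw [← integral_indicator_one (hW (measurableSet_singleton 0))]
  refine tendsto_integral_of_dominated_convergence (fun _ => 1)
    (fun k => Measurable.aestronglyMeasurable (by fun_prop)) (integrable_const 1)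
    (fun k => .of_forall fun x => ?_) (.of_forall fun x => ?_)
  · rw [Real.norm_of_nonneg (le_max_right _ _)]
    exact max_le (sub_le_self _ (mul_nonneg k.cast_nonneg (hW0 x))) zero_le_one
  rcases (hW0 x).eq_or_lt' with hx | hx
  · simp [hx]
  · have hlim : Tendsto (fun k : ℕ => 1 - k * W x) atTop atBot :=
      tendsto_atBot_add_const_left _ 1
        (tendsto_neg_atTop_atBot.comp (tendsto_natCast_atTop_atTop.atTop_mul_const hx))
    rw [indicator_of_notMem (by simpa using hx.ne')]
    refine tendsto_const_nhds.congr' ?_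
    filter_upwards [hlim.eventually_le_atBot 0] with k hk using (max_eq_right hk).symm

section ValueFunction

theorem exists_boundedContinuousFunction_eq_zero_iff_mem {E : Type*} [TopologicalSpace E]
    [PerfectlyNormalSpace E] {C : Set E} (hC : IsClosed C) :
    ∃ h : E →ᵇ ℝ, (∀ x, 0 ≤ h x) ∧ ∀ x, h x = 0 ↔ x ∈ C := by
  obtain ⟨h, rfl, h01⟩ :=
    perfectlyNormalSpace_iff_forall_isClosed_preimage_zero.1 ‹PerfectlyNormalSpace E› C hC
  refine ⟨.mkOfBound h 1 fun x y => ?_, fun x => (h01 x).1, fun _ => Iff.rfl⟩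
  simpa using Real.dist_le_of_mem_Icc (h01 x) (h01 y)

variable {E F : Type*} [TopologicalSpace E] [TopologicalSpace F] {U : Set F} {f : E → F → E}

/-- The function `x ↦ inf_{u ∈ U} W (f x u)`, as an operator on bounded continuous functions: the
optimal continuation value in the Bellman equation. -/
noncomputable def infSuccessor (hU : IsCompact U) (hUne : U.Nonempty)
    (hf : Continuous fun p : E × F => f p.1 p.2) (W : E →ᵇ ℝ) : E →ᵇ ℝ :=
  .ofNormedAddCommGroup (fun x => sInf ((fun u => W (f x u)) '' U))
    (hU.continuous_sInf (W.continuous.comp hf)) ‖W‖ fun x => by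
      obtain ⟨u, -, hu⟩ := hU.exists_sInf_image_eq hUne
        (W.continuous.comp (hf.comp (.prodMk_right x))).continuousOn
      exact hu ▸ W.norm_coe_le_norm (f x u)

variable (hU : IsCompact U) (hUne : U.Nonempty) (hf : Continuous fun p : E × F => f p.1 p.2)

theorem exists_infSuccessor_eq (W : E →ᵇ ℝ) (x : E) :
    ∃ u ∈ U, infSuccessor hU hUne hf W x = W (f x u) :=
  hU.exists_sInf_image_eq hUne (W.continuous.comp (hf.comp (.prodMk_right x))).continuousOn

theorem infSuccessor_le (W : E →ᵇ ℝ) (x : E) {u : F} (hu : u ∈ U) :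
    infSuccessor hU hUne hf W x ≤ W (f x u) :=
  csInf_le (hU.image (W.continuous.comp (hf.comp (.prodMk_right x)))).bddBelow
    (mem_image_of_mem _ hu)

theorem lipschitzWith_infSuccessor : LipschitzWith 1 (infSuccessor hU hUne hf) := by
  have sub_le_dist : ∀ (V W : E →ᵇ ℝ) (x : E),
      infSuccessor hU hUne hf V x - infSuccessor hU hUne hf W x ≤ dist V W := by
    intro V W x
    obtain ⟨u, hu, hWu⟩ := exists_infSuccessor_eq hU hUne hf W x
    calc infSuccessor hU hUne hf V x - infSuccessor hU hUne hf W x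
        ≤ V (f x u) - W (f x u) := hWu ▸ sub_le_sub_right (infSuccessor_le hU hUne hf V x hu) _
      _ ≤ dist V W := (le_abs_self _).trans (V.dist_coe_le_dist (f x u))
  refine .mk_one fun V W => (BoundedContinuousFunction.dist_le dist_nonneg).2 fun x => ?_
  exact abs_sub_le_iff.2 ⟨sub_le_dist V W x, dist_comm V W ▸ sub_le_dist W V x⟩

theorem exists_eq_add_smul_infSuccessor {α : ℝ} (hα0 : 0 ≤ α) (hα1 : α < 1) (h : E →ᵇ ℝ) :
    ∃ W : E →ᵇ ℝ, W = h + α • infSuccessor hU hUne hf W := by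
  let bellman : (E →ᵇ ℝ) → E →ᵇ ℝ := fun W => h + α • infSuccessor hU hUne hf W
  have hcontr : ContractingWith ⟨α, hα0⟩ bellman := by
    refine ⟨hα1, .of_dist_le_mul fun V W =>
      (BoundedContinuousFunction.dist_le (by positivity)).2 fun x => ?_⟩
    calc dist (bellman V x) (bellman W x)
        = α * dist (infSuccessor hU hUne hf V x) (infSuccessor hU hUne hf W x) := by
          simp [bellman, Real.dist_eq, ← mul_sub, abs_mul, abs_of_nonneg hα0]
      _ ≤ α * dist (infSuccessor hU hUne hf V) (infSuccessor hU hUne hf W) := by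
          gcongr
          exact BoundedContinuousFunction.dist_coe_le_dist x
      _ ≤ α * dist V W := by
          gcongr
          simpa using (lipschitzWith_infSuccessor hU hUne hf).dist_le_mul V W
  exact ⟨_, hcontr.fixedPoint_isFixedPt.symm⟩

theorem nonneg_of_smul_infSuccessor_le {α : ℝ} (hα0 : 0 ≤ α) (hα1 : α < 1) {W : E →ᵇ ℝ}
    (hW : ∀ x, α * infSuccessor hU hUne hf W x ≤ W x) (x : E) : 0 ≤ W x := by
  have : Nonempty E := ⟨x⟩
  have hbdd : BddBelow (range W) := W.isBounded_range.bddBelow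
  have iInf_le_infSuccessor : ∀ y, ⨅ z, W z ≤ infSuccessor hU hUne hf W y := fun y => by
    obtain ⟨u, -, hu⟩ := exists_infSuccessor_eq hU hUne hf W y
    exact hu ▸ ciInf_le hbdd (f y u)
  have mul_iInf_le : α * ⨅ z, W z ≤ ⨅ z, W z := le_ciInf fun y =>
    (mul_le_mul_of_nonneg_left (iInf_le_infSuccessor y) hα0).trans (hW y)
  have iInf_nonneg : 0 ≤ ⨅ z, W z := by nlinarith
  exact iInf_nonneg.trans (ciInf_le hbdd x)

end ValueFunction

section ControlledInvariance

variable {E F : Type*}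

/-- A set `S` of states is controlled invariant if from each of its points some control in `U`
keeps the successor state in `S`. -/
def IsControlledInvariant (f : E → F → E) (U : Set F) (S : Set E) : Prop :=
  ∀ x ∈ S, ∃ u ∈ U, f x u ∈ S

theorem IsControlledInvariant.exists_measurable_feedback [TopologicalSpace E] [MetrizableSpace E]
    [MeasurableSpace E] [BorelSpace E] [TopologicalSpace F] [MetrizableSpace F]
    [MeasurableSpace F] [BorelSpace F] [SecondCountableTopologyEither E F] [Nonempty F]
    {f : E → F → E} {U : Set F} {S : Set E} (hinv : IsControlledInvariant f U S)
    (hS : IsCompact S) (hU : IsCompact U) (hf : Continuous fun p : E × F => f p.1 p.2) :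
    ∃ g : E → F, Measurable g ∧ ∀ x ∈ S, g x ∈ U ∧ f x (g x) ∈ S := by
  have hK : IsCompact (S ×ˢ U ∩ (fun p : E × F => f p.1 p.2) ⁻¹' S) :=
    (hS.prod hU).inter_right (hS.isClosed.preimage hf)
  obtain ⟨g, hg, hgK⟩ := exists_measurable_section_of_isCompact hK
  refine ⟨g, hg, fun x hx => ?_⟩
  obtain ⟨u, hu, hfu⟩ := hinv x hx
  obtain ⟨⟨-, hgU⟩, hfg⟩ := hgK (x, u) ⟨⟨hx, hu⟩, hfu⟩
  exact ⟨hgU, hfg⟩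

theorem exists_continuous_isControlledInvariant_zeros [TopologicalSpace E]
    [PerfectlyNormalSpace E] [TopologicalSpace F] {X : Set E} (hX : IsClosed X) {U : Set F}
    (hU : IsCompact U) {f : E → F → E} (hf : Continuous fun p : E × F => f p.1 p.2)
    {α : ℝ} (hα0 : 0 < α) (hα1 : α < 1) :
    ∃ W : E → ℝ, Continuous W ∧ (∀ x, 0 ≤ W x) ∧ (∀ x ∈ X, ∀ u ∈ U, W x ≤ α * W (f x u)) ∧
      IsControlledInvariant f U (X ∩ W ⁻¹' {0}) := by
  rcases U.eq_empty_or_nonempty with rfl | hUne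
  · exact ⟨fun _ => 1, continuous_const, fun _ => zero_le_one, by simp,
      fun x hx => absurd hx.2 one_ne_zero⟩
  obtain ⟨h, h_nonneg, hhX⟩ := exists_boundedContinuousFunction_eq_zero_iff_mem hX
  obtain ⟨W, hW⟩ := exists_eq_add_smul_infSuccessor hU hUne hf hα0.le hα1 h
  have bellman : ∀ x, W x = h x + α * infSuccessor hU hUne hf W x := DFunLike.congr_fun hW
  have bellman_of_mem : ∀ x ∈ X, W x = α * infSuccessor hU hUne hf W x := fun x hx => by
    rw [bellman, (hhX x).2 hx, zero_add]
  have W_nonneg : ∀ x, 0 ≤ W x := nonneg_of_smul_infSuccessor_le hU hUne hf hα0.le hα1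
    fun x => (le_add_of_nonneg_left (h_nonneg x)).trans_eq (bellman x).symm
  have mem_of_eq_zero : ∀ x, W x = 0 → x ∈ X := fun x hx => by
    obtain ⟨u, -, hu⟩ := exists_infSuccessor_eq hU hUne hf W x
    have hcont : 0 ≤ α * infSuccessor hU hUne hf W x := mul_nonneg hα0.le (hu ▸ W_nonneg _)
    exact (hhX x).1 (by linarith [bellman x, h_nonneg x])
  refine ⟨W, W.continuous, W_nonneg, fun x hx u hu => ?_, fun x ⟨hx, hx0⟩ => ?_⟩
  · rw [bellman_of_mem x hx]
    exact mul_le_mul_of_nonneg_left (infSuccessor_le hU hUne hf W x hu) hα0.le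
  · obtain ⟨u, hu, hWu⟩ := exists_infSuccessor_eq hU hUne hf W x
    have hzero : W (f x u) = 0 := by
      rw [← hWu]
      exact (mul_eq_zero.1 ((bellman_of_mem x hx).symm.trans hx0)).resolve_left hα0.ne'
    exact ⟨u, hu, mem_of_eq_zero _ hzero, hzero⟩

end ControlledInvariance

section LinearPrograms

variable {E F : Type*} [TopologicalSpace E]

/-- `DualFeasD` for arbitrary state and control spaces. -/
structure DualFeasible (X : Set E) (U : Set F) (f : E → F → E) (α : ℝ) (v w : E → ℝ) : Prop where
  continuous_potential : Continuous v
  continuous_bound : Continuous w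
  mul_potential_le : ∀ x ∈ X, ∀ u ∈ U, α * v (f x u) ≤ v x
  potential_add_one_le : ∀ x ∈ X, v x + 1 ≤ w x
  bound_nonneg : ∀ x ∈ X, 0 ≤ w x

theorem dualFeasible_neg_mul_max {X : Set E} {U : Set F} {f : E → F → E} {α : ℝ} {W : E → ℝ}
    (hW : Continuous W) (hWf : ∀ x ∈ X, ∀ u ∈ U, W x ≤ α * W (f x u)) (k : ℕ) :
    DualFeasible X U f α (fun x => -(k * W x)) fun x => max (1 - k * W x) 0 where
  continuous_potential := by fun_prop
  continuous_bound := by fun_prop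
  mul_potential_le x hx u hu := by nlinarith [hWf x hx u hu, k.cast_nonneg (α := ℝ)]
  potential_add_one_le x _ := (neg_add_eq_sub _ _).trans_le (le_max_left _ _)
  bound_nonneg x _ := le_max_right _ _

variable [MeasurableSpace E] [MeasurableSpace F]

/-- `LiouvilleD` for arbitrary state and control spaces. -/
def DiscountedLiouville (f : E → F → E) (α : ℝ) (μ₀ : Measure E) (μ : Measure (E × F)) : Prop :=
  ∀ v : E → ℝ, Continuous v → ∫ p, v p.1 ∂μ = ∫ x, v x ∂μ₀ + α * ∫ p, v (f p.1 p.2) ∂μ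

theorem discountedLiouville_map_graph [OpensMeasurableSpace E] {f : E → F → E} {g : E → F}
    {α : ℝ} (hα : 0 ≤ α) {μ₀ ρ : Measure E} (hg : Measurable g)
    (hf : Measurable fun p : E × F => f p.1 p.2)
    (hρ : ρ = μ₀ + ENNReal.ofReal α • ρ.map fun x => f x (g x))
    (hint : ∀ v : E → ℝ, Continuous v → Integrable v ρ) :
    DiscountedLiouville f α μ₀ (ρ.map fun x => (x, g x)) := by
  intro v hv
  have hgraph : Measurable fun x => (x, g x) := measurable_id.prodMk hg
  have hT : Measurable fun x => f x (g x) := hf.comp hgraph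
  have hvf : Measurable fun p : E × F => v (f p.1 p.2) := hv.measurable.comp hf
  have hsum := hint v hv
  rw [hρ, integrable_add_measure] at hsum
  calc ∫ p, v p.1 ∂ρ.map (fun x => (x, g x)) = ∫ x, v x ∂ρ :=
        integral_map hgraph.aemeasurable (hv.measurable.comp measurable_fst).aestronglyMeasurable
    _ = ∫ x, v x ∂μ₀ + α * ∫ x, v x ∂ρ.map (fun x => f x (g x)) := by
        conv_lhs => rw [hρ]
        rw [integral_add_measure hsum.1 hsum.2, integral_smul_measure, ENNReal.toReal_ofReal hα,
          smul_eq_mul]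
    _ = ∫ x, v x ∂μ₀ + α * ∫ p, v (f p.1 p.2) ∂ρ.map (fun x => (x, g x)) := by
        rw [integral_map hT.aemeasurable hv.aestronglyMeasurable,
          integral_map hgraph.aemeasurable hvf.aestronglyMeasurable]

variable [TopologicalSpace F]

/-- `FeasibleD` for arbitrary state and control spaces, with a reference measure `ν` in place of the
Lebesgue measure. -/
structure PrimalFeasible (ν : Measure E) (X : Set E) (U : Set F) (f : E → F → E) (α : ℝ)
    (μ₀ : Measure E) (μ : Measure (E × F)) (μh : Measure E) : Prop where
  isFiniteMeasure_initial : IsFiniteMeasure μ₀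
  isFiniteMeasure_occupation : IsFiniteMeasure μ
  isFiniteMeasure_slack : IsFiniteMeasure μh
  support_initial : μ₀.support ⊆ X
  support_slack : μh.support ⊆ X
  support_occupation : μ.support ⊆ X ×ˢ U
  liouville : DiscountedLiouville f α μ₀ μ
  add_slack : μ₀ + μh = ν.restrict X

/-- The set of objective values of the primal problem; its supremum is the value `p*`. -/
def primalValues (ν : Measure E) (X : Set E) (U : Set F) (f : E → F → E) (α : ℝ) : Set ℝ :=
  {r | ∃ μ₀ μ μh, PrimalFeasible ν X U f α μ₀ μ μh ∧ r = μ₀.real X}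

/-- The set of objective values of the dual problem; its infimum is the value `d*`. -/
def dualValues (ν : Measure E) (X : Set E) (U : Set F) (f : E → F → E) (α : ℝ) : Set ℝ :=
  {r | ∃ v w, DualFeasible X U f α v w ∧ r = ∫ x in X, w x ∂ν}

section WeakDuality

variable [T2Space E] [SecondCountableTopology E] [OpensMeasurableSpace E] [T2Space F]
  [SecondCountableTopology F] [OpensMeasurableSpace F] {ν : Measure E} {X : Set E} {U : Set F}
  {f : E → F → E} {α : ℝ} {μ₀ : Measure E} {μ : Measure (E × F)} {μh : Measure E} {v w : E → ℝ}

theorem PrimalFeasible.integral_potential_nonneg (hp : PrimalFeasible ν X U f α μ₀ μ μh)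
    (hX : IsCompact X) (hU : IsCompact U) (hf : Continuous fun p : E × F => f p.1 p.2)
    (hd : DualFeasible X U f α v w) : 0 ≤ ∫ x, v x ∂μ₀ := by
  have := hp.isFiniteMeasure_occupation
  have hXU : ∀ᵐ p ∂μ, p ∈ X ×ˢ U := mem_of_superset Measure.support_mem_ae hp.support_occupation
  have integral_le : α * ∫ p, v (f p.1 p.2) ∂μ ≤ ∫ p, v p.1 ∂μ := by
    rw [← integral_const_mul]
    refine integral_mono_ae
      ((integrable_of_ae_mem_isCompact (hX.prod hU) hXU
        (hd.continuous_potential.comp hf)).const_mul α)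
      (integrable_of_ae_mem_isCompact (hX.prod hU) hXU
        (hd.continuous_potential.comp continuous_fst)) ?_
    filter_upwards [hXU] with p hp using hd.mul_potential_le p.1 hp.1 p.2 hp.2
  linarith [hp.liouville v hd.continuous_potential]

theorem PrimalFeasible.real_le_integral (hp : PrimalFeasible ν X U f α μ₀ μ μh)
    (hX : IsCompact X) (hU : IsCompact U) (hf : Continuous fun p : E × F => f p.1 p.2)
    (hd : DualFeasible X U f α v w) : μ₀.real X ≤ ∫ x in X, w x ∂ν := by
  have := hp.isFiniteMeasure_initial
  have := hp.isFiniteMeasure_slack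
  have hμ₀ : ∀ᵐ x ∂μ₀, x ∈ X := mem_of_superset Measure.support_mem_ae hp.support_initial
  have hμh : ∀ᵐ x ∂μh, x ∈ X := mem_of_superset Measure.support_mem_ae hp.support_slack
  have hvμ₀ : Integrable v μ₀ :=
    integrable_of_ae_mem_isCompact hX hμ₀ hd.continuous_potential
  have hwμ₀ : Integrable w μ₀ :=
    integrable_of_ae_mem_isCompact hX hμ₀ hd.continuous_bound
  have hwμh : Integrable w μh := integrable_of_ae_mem_isCompact hX hμh hd.continuous_bound
  calc μ₀.real X ≤ μ₀.real univ := measureReal_mono (subset_univ X)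
    _ ≤ ∫ x, v x ∂μ₀ + μ₀.real univ :=
        le_add_of_nonneg_left (hp.integral_potential_nonneg hX hU hf hd)
    _ = ∫ x, (v x + 1) ∂μ₀ := by simp [integral_add hvμ₀ (integrable_const 1)]
    _ ≤ ∫ x, w x ∂μ₀ := by
        refine integral_mono_ae (hvμ₀.add (integrable_const 1)) hwμ₀ ?_
        filter_upwards [hμ₀] with x hx using hd.potential_add_one_le x hx
    _ ≤ ∫ x, w x ∂μ₀ + ∫ x, w x ∂μh := by
        refine le_add_of_nonneg_right (integral_nonneg_of_ae ?_)
        filter_upwards [hμh] with x hx using hd.bound_nonneg x hx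
    _ = ∫ x in X, w x ∂ν := by rw [← integral_add_measure hwμ₀ hwμh, hp.add_slack]

end WeakDuality

section Attainment

variable [MetrizableSpace E] [BorelSpace E] [MetrizableSpace F] [SecondCountableTopology F]
  [BorelSpace F] [Nonempty F] {ν : Measure E} [IsFiniteMeasureOnCompacts ν] {X S : Set E}
  {U : Set F} {f : E → F → E} {α : ℝ}

theorem IsControlledInvariant.exists_primalFeasible (hinv : IsControlledInvariant f U S)
    (hX : IsCompact X) (hS : IsCompact S) (hSX : S ⊆ X) (hU : IsCompact U)
    (hf : Continuous fun p : E × F => f p.1 p.2) (hα0 : 0 ≤ α) (hα1 : α < 1) :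
    ∃ μ, PrimalFeasible ν X U f α (ν.restrict S) μ (ν.restrict (X \ S)) := by
  obtain ⟨g, hg, hgS⟩ := hinv.exists_measurable_feedback hS hU hf
  have hgraph : Measurable fun x => (x, g x) := measurable_id.prodMk hg
  have hT : Measurable fun x => f x (g x) := hf.measurable.comp hgraph
  have hνS : IsFiniteMeasure (ν.restrict S) := isFiniteMeasure_restrict.2 hS.measure_ne_top
  let ρ := discountedOccupation (fun x => f x (g x)) (ENNReal.ofReal α) (ν.restrict S)
  have : IsFiniteMeasure ρ :=
    isFiniteMeasure_discountedOccupation hT (ENNReal.ofReal_lt_one.2 hα1)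
  have hρS : ∀ᵐ x ∂ρ, x ∈ S := ae_mem_discountedOccupation hT hS.measurableSet
    (fun x hx => (hgS x hx).2) (ae_restrict_mem hS.measurableSet)
  have hXU : ∀ᵐ p ∂ρ.map fun x => (x, g x), p ∈ X ×ˢ U := by
    refine (ae_map_iff hgraph.aemeasurable (hX.prod hU).measurableSet).2 ?_
    filter_upwards [hρS] with x hx using ⟨hSX hx, (hgS x hx).1⟩
  have support_restrict_subset : ∀ s ⊆ X, MeasurableSet s → (ν.restrict s).support ⊆ X :=
    fun s hs hsm => Measure.support_subset_of_isClosed hX.isClosed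
      (mem_of_superset (ae_restrict_mem hsm) hs)
  exact ⟨ρ.map fun x => (x, g x),
    { isFiniteMeasure_initial := hνS
      isFiniteMeasure_occupation := inferInstance
      isFiniteMeasure_slack := isFiniteMeasure_restrict.2
        (measure_ne_top_of_subset sdiff_subset hX.measure_ne_top)
      support_initial := support_restrict_subset S hSX hS.measurableSet
      support_slack := support_restrict_subset (X \ S) sdiff_subset
        (hX.measurableSet.diff hS.measurableSet)
      support_occupation := Measure.support_subset_of_isClosed (hX.prod hU).isClosed hXU
      liouville := discountedLiouville_map_graph hα0 hg hf.measurable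
        (discountedOccupation_eq_add_smul_map hT)
        fun v hv => integrable_of_ae_mem_isCompact hS hρS hv
      add_slack := by
        rw [← Measure.restrict_inter_add_sdiff X hS.measurableSet, inter_eq_right.2 hSX] }⟩

end Attainment

section Duality

variable [MetrizableSpace E] [SecondCountableTopology E] [BorelSpace E] [MetrizableSpace F]
  [SecondCountableTopology F] [BorelSpace F] [Nonempty F] {ν : Measure E}
  [IsFiniteMeasureOnCompacts ν] {X : Set E} {U : Set F} {f : E → F → E} {α : ℝ}

theorem exists_isGreatest_primalValues_isGLB_dualValues (hX : IsCompact X) (hU : IsCompact U)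
    (hf : Continuous fun p : E × F => f p.1 p.2) (hα0 : 0 < α) (hα1 : α < 1) :
    ∃ r, IsGreatest (primalValues ν X U f α) r ∧ IsGLB (dualValues ν X U f α) r := by
  obtain ⟨W, hW, hW0, hWf, hinv⟩ :=
    exists_continuous_isControlledInvariant_zeros hX.isClosed hU hf hα0 hα1
  have hzeros : IsClosed (W ⁻¹' {0}) := isClosed_singleton.preimage hW
  have : IsFiniteMeasure (ν.restrict X) := isFiniteMeasure_restrict.2 hX.measure_ne_top
  obtain ⟨μ, hμ⟩ := hinv.exists_primalFeasible (ν := ν) hX (hX.inter_right hzeros)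
    inter_subset_left hU hf hα0.le hα1
  have weak_duality : ∀ r ∈ primalValues ν X U f α, ∀ s ∈ dualValues ν X U f α, r ≤ s := by
    rintro _ ⟨_, _, _, hp, rfl⟩ _ ⟨_, _, hd, rfl⟩
    exact hp.real_le_integral hX hU hf hd
  have attained : ν.real (X ∩ W ⁻¹' {0}) ∈ primalValues ν X U f α := by
    refine ⟨_, _, _, hμ, ?_⟩
    rw [measureReal_restrict_apply hX.measurableSet, ← inter_assoc, inter_self]
  have approximated : Tendsto (fun k : ℕ => ∫ x in X, max (1 - k * W x) 0 ∂ν) atTop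
      (𝓝 (ν.real (X ∩ W ⁻¹' {0}))) := by
    rw [inter_comm, ← measureReal_restrict_apply hzeros.measurableSet]
    exact tendsto_integral_max_one_sub_mul hW.measurable hW0
  refine ⟨_, ⟨attained, fun r hr => ?_⟩, fun s hs => weak_duality _ attained s hs, fun b hb => ?_⟩
  · exact ge_of_tendsto' approximated fun k =>
      weak_duality r hr _ ⟨_, _, dualFeasible_neg_mul_max hW hWf k, rfl⟩
  · exact ge_of_tendsto' approximated fun k =>
      hb ⟨_, _, dualFeasible_neg_mul_max hW hWf k, rfl⟩

theorem discrete_no_duality_gap_general (hX : IsCompact X) (hU : IsCompact U)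
    (hf : Continuous fun p : E × F => f p.1 p.2) (hα0 : 0 < α) (hα1 : α < 1) :
    sSup (primalValues ν X U f α) = sInf (dualValues ν X U f α) := by
  obtain ⟨r, hprimal, hdual⟩ :=
    exists_isGreatest_primalValues_isGLB_dualValues (ν := ν) hX hU hf hα0 hα1
  rw [hprimal.csSup_eq, hdual.csInf_eq hdual.nonempty]

end Duality

end LinearPrograms

section Euclidean

theorem msupport_eq_support {α : Type*} [TopologicalSpace α] [MeasurableSpace α] (μ : Measure α) :
    msupport μ = μ.support := by
  ext x
  simp only [msupport, Measure.support_eq_forall_isOpen, mem_ofPred_eq]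
  exact ⟨fun h s hx hs => h s hs hx, fun h s hs hx => h s hx hs⟩

variable {n m : ℕ} {X : Set (EuclideanSpace ℝ (Fin n))} {U : Set (EuclideanSpace ℝ (Fin m))}
  {f : EuclideanSpace ℝ (Fin n) → EuclideanSpace ℝ (Fin m) → EuclideanSpace ℝ (Fin n)} {α : ℝ}

theorem feasibleD_iff_primalFeasible {μ₀ : Measure (EuclideanSpace ℝ (Fin n))}
    {μ : Measure (EuclideanSpace ℝ (Fin n) × EuclideanSpace ℝ (Fin m))}
    {μh : Measure (EuclideanSpace ℝ (Fin n))} :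
    FeasibleD X U f α μ₀ μ μh ↔ PrimalFeasible volume X U f α μ₀ μ μh := by
  simp only [FeasibleD, msupport_eq_support]
  exact ⟨fun ⟨h₁, h₂, h₃, h₄, h₅, h₆, h₇, h₈⟩ => ⟨h₁, h₂, h₃, h₄, h₅, h₆, h₇, h₈⟩,
    fun ⟨h₁, h₂, h₃, h₄, h₅, h₆, h₇, h₈⟩ => ⟨h₁, h₂, h₃, h₄, h₅, h₆, h₇, h₈⟩⟩

theorem dualFeasD_iff_dualFeasible {v w : EuclideanSpace ℝ (Fin n) → ℝ} :
    DualFeasD X U f α v w ↔ DualFeasible X U f α v w :=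
  ⟨fun ⟨hv, hw, hvf, hvw, hw0⟩ => ⟨hv, hw, hvf, hvw, hw0⟩,
    fun ⟨hv, hw, hvf, hvw, hw0⟩ => ⟨hv, hw, hvf, hvw, hw0⟩⟩

end Euclidean

theorem discrete_no_duality_gap {n m : ℕ}
    (X : Set (EuclideanSpace ℝ (Fin n))) (U : Set (EuclideanSpace ℝ (Fin m)))
    (hX : IsCompact X) (hU : IsCompact U)
    (f : EuclideanSpace ℝ (Fin n) → EuclideanSpace ℝ (Fin m) → EuclideanSpace ℝ (Fin n))
    (hf : Continuous fun p : EuclideanSpace ℝ (Fin n) × EuclideanSpace ℝ (Fin m) => f p.1 p.2)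
    (α : ℝ) (hα0 : 0 < α) (hα1 : α < 1) :
    sSup {r : ℝ | ∃ μ₀ μ μh, FeasibleD X U f α μ₀ μ μh ∧ r = (μ₀ X).toReal}
      = sInf {r : ℝ | ∃ v w, DualFeasD X U f α v w ∧ r = ∫ x in X, w x ∂volume} := by
  simp only [feasibleD_iff_primalFeasible, dualFeasD_iff_dualFeasible]
  exact discrete_no_duality_gap_general hX hU hf hα0 hα1
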